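/- (Proposition on extension to centralizer subalgebras, extension form.) Under the hypotheses in the context, the bimodule M extends to the diagonal subalgebra of C ⊗ C'ᵒᵖ, where C = b·k[N·C_G(N)] and C' = b'·k[N'·C_G(N)]: there exists a group homomorphism ρ from K := {(x,y) ∈ (N·C_G(N)) × (N'·C_G(N)) : x⁻¹y ∈ N} to the group of k-linear automorphisms of M such that ρ(n, n')(m) = π(single n 1)·m·π'(single n'⁻¹ 1) for all n ∈ N, n' ∈ N', m ∈ M. -/

import Mathlib

open scoped TensorProduct
open MonoidAlgebra

noncomputable section

/-- The block algebra: the quotient of `R` by the two-sided ideal generated by `1 - e`. -/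
abbrev BlockQuot {R : Type} [Ring R] (e : R) : Type :=
  (TwoSidedIdeal.span {1 - e}).ringCon.Quotient

/-- The canonical projection onto the block algebra. -/
def blockPi {R : Type} [Ring R] (e : R) : R →+* BlockQuot e where
  toFun r := ((r : R) : (TwoSidedIdeal.span {1 - e}).ringCon.Quotient)
  map_one' := RingCon.coe_one _
  map_mul' := RingCon.coe_mul _
  map_zero' := RingCon.coe_zero _
  map_add' := RingCon.coe_add _

instance blockAlgebra {k R : Type} [CommRing k] [Ring R] [Algebra k R] (e : R) :
    Algebra k (BlockQuot e) :=
  RingHom.toAlgebra' ((blockPi e).comp (algebraMap k R)) (by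
    intro c x
    induction x using Quotient.inductionOn' with
    | h r =>
      show ((algebraMap k R c : R) : BlockQuot e) * ↑r = ↑r * ↑(algebraMap k R c)
      rw [← RingCon.coe_mul, ← RingCon.coe_mul, Algebra.commutes])

/-- `M` induces a Morita equivalence between `B` and `B'`: it is a finitely generated
projective generator as a left `B`-module and the right `B'`-action gives a ring
isomorphism of `B'ᵐᵒᵖ` onto `End_B(M)`. -/
def InducesMorita (k : Type) [CommRing k] (B B' : Type) [Ring B] [Ring B']
    [Algebra k B] [Algebra k B'] (M : Type) [AddCommGroup M]
    [Module (B ⊗[k] B'ᵐᵒᵖ) M] : Prop :=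
  letI : Module B M :=
    Module.compHom M (Algebra.TensorProduct.includeLeftRingHom : B →+* B ⊗[k] B'ᵐᵒᵖ)
  Module.Finite B M ∧ Module.Projective B M ∧
    (∃ (n : ℕ) (f : (Fin n → M) →ₗ[B] B), Function.Surjective f) ∧
    ∃ φ : B'ᵐᵒᵖ →+* Module.End B M,
      Function.Bijective φ ∧ ∀ (β' : B'ᵐᵒᵖ) (m : M), φ β' m = ((1 : B) ⊗ₜ[k] β') • m

/-- The subgroup `{(x, y) : x ∈ H₁, y ∈ G' and x⁻¹y ∈ H}` of `G × G`, for `H` normal. -/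
def diagSubgroup {G : Type} [Group G] (H₁ G' H : Subgroup G) (hH : H.Normal) :
    Subgroup (G × G) where
  carrier := {p | p.1 ∈ H₁ ∧ p.2 ∈ G' ∧ p.1⁻¹ * p.2 ∈ H}
  one_mem' := ⟨H₁.one_mem, G'.one_mem, by simpa using H.one_mem⟩
  mul_mem' := by
    rintro ⟨a, b⟩ ⟨c, d⟩ ⟨ha, hb, hab⟩ ⟨hc, hd, hcd⟩
    refine ⟨H₁.mul_mem ha hc, G'.mul_mem hb hd, ?_⟩
    have h1 : c⁻¹ * (a⁻¹ * b) * c⁻¹⁻¹ ∈ H := hH.conj_mem _ hab c⁻¹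
    have key : (a * c)⁻¹ * (b * d) = (c⁻¹ * (a⁻¹ * b) * c⁻¹⁻¹) * (c⁻¹ * d) := by group
    show (a * c)⁻¹ * (b * d) ∈ H
    rw [key]
    exact H.mul_mem h1 hcd
  inv_mem' := by
    rintro ⟨a, b⟩ ⟨ha, hb, hab⟩
    refine ⟨H₁.inv_mem ha, G'.inv_mem hb, ?_⟩
    have h1 : b * (a⁻¹ * b)⁻¹ * b⁻¹ ∈ H := hH.conj_mem _ (H.inv_mem hab) b
    have key : a⁻¹⁻¹ * b⁻¹ = b * (a⁻¹ * b)⁻¹ * b⁻¹ := by group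
    show a⁻¹⁻¹ * b⁻¹ ∈ H
    rw [key]
    exact h1

/-!
The factor `C_G(N)` acts trivially on `M`. Put `C = C_G(N)` and let `ΔC` be its diagonal copy in
`G × G`. Every element of `K` has the form `(n c, n' c)` with `n ∈ N`, `n' ∈ N'` and `c ∈ C`, so
`K ≤ (N × N') ΔC`, and `ΔC` centralizes `N × N'`. By the second isomorphism theorem an action of
`N × N'` extends to this product, with `ΔC` acting trivially, as soon as `(N × N') ∩ ΔC` acts
trivially. That intersection consists of the pairs `(z, z)` with `z ∈ Z(N)`, whose action
`m ↦ z m z⁻¹` is trivial because `Z(N)` acts identically on both sides.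
-/

section GroupExtension

open Subgroup
open scoped Pointwise

variable {Γ A : Type*} [Group Γ] [Monoid A]

theorem exists_extension_sup_of_le_normalizer {H D : Subgroup Γ} (hHD : H ≤ normalizer D)
    (σ : H →* A) (hσ : ∀ h : H, (h : Γ) ∈ D → σ h = 1) :
    ∃ ρ : ↥(H ⊔ D) →* A, ∀ h : H, ρ (inclusion le_sup_left h) = σ h := by
  have : (D.subgroupOf H).Normal := normal_subgroupOf_of_le_normalizer hHD
  have : (D.subgroupOf (H ⊔ D)).Normal := normal_subgroupOf_sup_of_le_normalizer hHD
  let e := QuotientGroup.quotientInfEquivProdNormalizerQuotient H D hHD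
  let σ' : H ⧸ D.subgroupOf H →* A := QuotientGroup.lift _ σ hσ
  refine ⟨(σ'.comp e.symm.toMonoidHom).comp (QuotientGroup.mk' _), fun h ↦ ?_⟩
  have he : e.symm (QuotientGroup.mk' _ (inclusion le_sup_left h)) = QuotientGroup.mk' _ h :=
    e.symm_apply_eq.2 rfl
  exact congrArg σ' he

/-- The diagonal copy `ΔC = {(c, c) : c ∈ C}` of a subgroup `C ≤ Γ` inside `Γ × Γ`. -/
def diagonalCopy (C : Subgroup Γ) : Subgroup (Γ × Γ) :=
  C.map ((MonoidHom.id Γ).prod (MonoidHom.id Γ))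

theorem mem_diagonalCopy {C : Subgroup Γ} {x : Γ × Γ} :
    x ∈ diagonalCopy C ↔ x.1 ∈ C ∧ x.1 = x.2 := by
  constructor
  · rintro ⟨c, hc, rfl⟩
    exact ⟨hc, rfl⟩
  · rintro ⟨hx, hxy⟩
    exact ⟨x.1, hx, Prod.ext rfl hxy⟩

theorem prod_le_centralizer_diagonalCopy {H K C : Subgroup Γ} (hH : H ≤ centralizer C)
    (hK : K ≤ centralizer C) : H.prod K ≤ centralizer (diagonalCopy C) := by
  rintro ⟨h, k⟩ ⟨hh, hk⟩
  refine mem_centralizer_iff.2 ?_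
  rintro _ ⟨c, hc, rfl⟩
  exact Prod.ext (mem_centralizer_iff.1 (hH hh) c hc) (mem_centralizer_iff.1 (hK hk) c hc)

variable {G : Type} [Group G] {N N' C : Subgroup G}

theorem diagSubgroup_le_prod_sup_diagonalCopy [hN : N.Normal] (hN'N : N' ≤ N)
    (hNC : N ⊓ C ≤ N') (hN'C : N' ≤ normalizer C) :
    diagSubgroup (N ⊔ C) (N' ⊔ C) N hN ≤ N.prod N' ⊔ diagonalCopy C := by
  rintro ⟨x, y⟩ ⟨hx, hy, hxy⟩
  obtain ⟨n, hn, c, hc, rfl⟩ := mem_sup_of_normal_left.1 hx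
  obtain ⟨n', hn', d, hd, rfl⟩ : y ∈ (N' : Set G) * C := by
    rwa [← coe_mul_of_left_le_normalizer_right N' C hN'C]
  have hdc_mem_N : d * c⁻¹ ∈ N := by
    have hconj : c * ((n * c)⁻¹ * (n' * d)) * c⁻¹ ∈ N := hN.conj_mem _ hxy c
    have hdc : d * c⁻¹ = n'⁻¹ * n * (c * ((n * c)⁻¹ * (n' * d)) * c⁻¹) := by group
    rw [hdc]
    exact N.mul_mem (N.mul_mem (N.inv_mem (hN'N hn')) hn) hconj
  have hdc_mem_N' : d * c⁻¹ ∈ N' := hNC ⟨hdc_mem_N, C.mul_mem hd (C.inv_mem hc)⟩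
  have hfactor : (n * c, n' * d) = (n, n' * (d * c⁻¹)) * (c, c) := by simp [mul_assoc]
  rw [hfactor]
  exact mul_mem_sup ⟨hn, N'.mul_mem hn' hdc_mem_N'⟩ (mem_diagonalCopy.2 ⟨hc, rfl⟩)

theorem exists_extension_diagSubgroup [hN : N.Normal] (hN'N : N' ≤ N) (hNC : N ⊓ C ≤ N')
    (hCN : C ≤ centralizer N) (σ : N × N' →* A)
    (hσ : ∀ (z : N) (z' : N'), (z : G) ∈ C → (z : G) = z' → σ (z, z') = 1) :
    ∃ ρ : diagSubgroup (N ⊔ C) (N' ⊔ C) N hN →* A,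
      ∀ (n : N) (n' : N') (h : (↑n, ↑n') ∈ diagSubgroup (N ⊔ C) (N' ⊔ C) N hN),
        ρ ⟨(↑n, ↑n'), h⟩ = σ (n, n') := by
  have hNcent : N ≤ centralizer C := le_centralizer_iff.1 hCN
  have hN'cent : N' ≤ centralizer C := hN'N.trans hNcent
  obtain ⟨ρ, hρ⟩ := exists_extension_sup_of_le_normalizer
    ((prod_le_centralizer_diagonalCopy hNcent hN'cent).trans (centralizer_le_normalizer _))
    (σ.comp (N.prodEquiv N').toMonoidHom)
    fun h hh ↦ hσ _ _ (mem_diagonalCopy.1 hh).1 (mem_diagonalCopy.1 hh).2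
  have hle := diagSubgroup_le_prod_sup_diagonalCopy hN'N hNC
    (hN'cent.trans (centralizer_le_normalizer _))
  exact ⟨ρ.comp (inclusion hle), fun n n' _ ↦ hρ ⟨(n, n'), n.2, n'.2⟩⟩

end GroupExtension

section Bimodule

variable {k B B' P Q M : Type*} [CommSemiring k] [Semiring B] [Algebra k B] [Semiring B']
  [Algebra k B'] [Group P] [Group Q] [AddCommMonoid M] [Module k M] [Module (B ⊗[k] B'ᵐᵒᵖ) M]
  [IsScalarTower k (B ⊗[k] B'ᵐᵒᵖ) M]

/-- The homomorphism `(p, q) ↦ α p ⊗ op (α' q⁻¹)`; through it, `(p, q)` acts on a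
`(B, B')`-bimodule by `m ↦ α p · m · α' q⁻¹`. -/
def bimoduleHom (α : P →* B) (α' : Q →* B') : P × Q →* B ⊗[k] B'ᵐᵒᵖ where
  toFun x := α x.1 ⊗ₜ MulOpposite.op (α' x.2⁻¹)
  map_one' := by simp [Algebra.TensorProduct.one_def]
  map_mul' x y := by simp

variable (k M) in
/-- The `k`-linear automorphisms `m ↦ α p · m · α' q⁻¹` of a `(B, B')`-bimodule `M`, as a
homomorphism in `(p, q)`. -/
def bimoduleAut (α : P →* B) (α' : Q →* B') : P × Q →* (M ≃ₗ[k] M) :=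
  (DistribMulAction.toModuleAut k M).comp (bimoduleHom (k := k) α α').toHomUnits

theorem bimoduleAut_apply (α : P →* B) (α' : Q →* B') (p : P) (q : Q) (m : M) :
    bimoduleAut k M α α' (p, q) m = (α p ⊗ₜ[k] MulOpposite.op (α' q⁻¹)) • m :=
  rfl

theorem bimoduleAut_eq_one {α : P →* B} {α' : Q →* B'} {p : P} {q : Q}
    (h : ∀ m : M, (α p ⊗ₜ[k] (1 : B'ᵐᵒᵖ)) • m = ((1 : B) ⊗ₜ[k] MulOpposite.op (α' q)) • m) :
    bimoduleAut k M α α' (p, q) = 1 := by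
  ext m
  calc (α p ⊗ₜ[k] MulOpposite.op (α' q⁻¹)) • m
      = ((1 : B) ⊗ₜ[k] MulOpposite.op (α' q⁻¹)) • (α p ⊗ₜ[k] (1 : B'ᵐᵒᵖ)) • m := by
        simp [smul_smul]
    _ = ((1 : B) ⊗ₜ[k] MulOpposite.op (α' q⁻¹)) • ((1 : B) ⊗ₜ[k] MulOpposite.op (α' q)) • m := by
        rw [h]
    _ = m := by
        simp [smul_smul, ← MulOpposite.op_mul, ← map_mul, ← Algebra.TensorProduct.one_def]

end Bimodule

theorem extension_to_centralizers_general {k B B' M : Type*} [CommSemiring k] [Semiring B]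
    [Algebra k B] [Semiring B'] [Algebra k B'] [AddCommMonoid M] [Module k M]
    [Module (B ⊗[k] B'ᵐᵒᵖ) M] [IsScalarTower k (B ⊗[k] B'ᵐᵒᵖ) M] {G : Type} [Group G]
    {N N' : Subgroup G} [hN : N.Normal] (hN'N : N' ≤ N)
    (hNC : N ⊓ Subgroup.centralizer N ≤ N') (α : N →* B) (α' : N' →* B')
    (hZ : ∀ z ∈ Subgroup.center N, ∀ hz : (z : G) ∈ N', ∀ m : M,
      (α z ⊗ₜ[k] (1 : B'ᵐᵒᵖ)) • m = ((1 : B) ⊗ₜ[k] MulOpposite.op (α' ⟨z, hz⟩)) • m) :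
    ∃ ρ : diagSubgroup (N ⊔ Subgroup.centralizer N) (N' ⊔ Subgroup.centralizer N) N hN →*
        (M ≃ₗ[k] M),
      ∀ (κ : diagSubgroup (N ⊔ Subgroup.centralizer N) (N' ⊔ Subgroup.centralizer N) N hN)
        (n : N) (n' : N') (m : M), (κ : G × G) = (↑n, ↑n') →
          ρ κ m = (α n ⊗ₜ[k] MulOpposite.op (α' n'⁻¹)) • m := by
  obtain ⟨ρ, hρ⟩ := exists_extension_diagSubgroup hN'N hNC le_rfl (bimoduleAut k M α α') <| by
    rintro z ⟨_, hz'⟩ hzC rfl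
    have hz : z ∈ Subgroup.center N := Subgroup.mem_center_iff.2 fun g ↦
      Subtype.ext (Subgroup.mem_centralizer_iff.1 hzC g g.2)
    exact bimoduleAut_eq_one (hZ z hz hz')
  refine ⟨ρ, ?_⟩
  rintro ⟨_, hκ⟩ n n' m rfl
  rw [hρ n n' hκ, bimoduleAut_apply]

/-- **Extension to centralizer subalgebras** (Marcus–Minuță, Proposition 4.2, extension form).
If `M` is a `(B, B')`-bimodule inducing a Morita equivalence between the blocks
`B = b·kN` and `B' = b'·kN'` on which `Z(N)` acts identically on both sides, then `M`
extends to the diagonal subalgebra of `C ⊗ C'ᵒᵖ`, where `C = b·k[N·C_G(N)]` and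
`C' = b'·k[N'·C_G(N)]`. -/
theorem extension_to_centralizers (k : Type) [CommRing k] (G : Type) [Group G]
    (N : Subgroup G) [hN : N.Normal] (G' : Subgroup G)
    (hC : Subgroup.centralizer (N : Set G) ≤ G')
    (hGG' : N ⊔ G' = ⊤)
    (b : MonoidAlgebra k ↥N)
    (hbc : b ∈ Subring.center (MonoidAlgebra k ↥N)) (hbi : IsIdempotentElem b)
    (hbinv : ∀ g : G,
      single g (1 : k) * mapDomainRingHom k N.subtype b * single g⁻¹ (1 : k) =
        mapDomainRingHom k N.subtype b)
    (b' : MonoidAlgebra k ↥(G' ⊓ N))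
    (hb'c : b' ∈ Subring.center (MonoidAlgebra k ↥(G' ⊓ N))) (hb'i : IsIdempotentElem b')
    (hb'inv : ∀ g' : ↥G',
      single g' (1 : k) *
          mapDomainRingHom k (Subgroup.inclusion (inf_le_left : G' ⊓ N ≤ G')) b' *
          single g'⁻¹ (1 : k) =
        mapDomainRingHom k (Subgroup.inclusion (inf_le_left : G' ⊓ N ≤ G')) b')
    (M : Type) [AddCommGroup M] [Module k M]
    [Module (BlockQuot b ⊗[k] (BlockQuot b')ᵐᵒᵖ) M]
    [IsScalarTower k (BlockQuot b ⊗[k] (BlockQuot b')ᵐᵒᵖ) M]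
    (hM : InducesMorita k (BlockQuot b) (BlockQuot b') M)
    (hZ : ∀ z : ↥N, z ∈ Subgroup.center ↥N → ∀ hz' : (z : G) ∈ G' ⊓ N, ∀ m : M,
      (blockPi b (single z (1 : k)) ⊗ₜ[k] (1 : (BlockQuot b')ᵐᵒᵖ)) • m =
        ((1 : BlockQuot b) ⊗ₜ[k]
          MulOpposite.op (blockPi b' (single (⟨(z : G), hz'⟩ : ↥(G' ⊓ N)) (1 : k)))) • m) :
    ∃ ρ : ↥(diagSubgroup (N ⊔ Subgroup.centralizer (N : Set G))
        ((G' ⊓ N) ⊔ Subgroup.centralizer (N : Set G)) N hN) →*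
        (M ≃ₗ[k] M),
      ∀ (κ : ↥(diagSubgroup (N ⊔ Subgroup.centralizer (N : Set G))
          ((G' ⊓ N) ⊔ Subgroup.centralizer (N : Set G)) N hN))
        (n : ↥N) (n' : ↥(G' ⊓ N)) (m : M),
        (κ : G × G) = ((n : G), (n' : G)) →
          ρ κ m =
            (blockPi b (single n (1 : k)) ⊗ₜ[k]
              MulOpposite.op (blockPi b' (single n'⁻¹ (1 : k)))) • m :=
  extension_to_centralizers_general inf_le_right (fun _ hz ↦ ⟨hC hz.2, hz.1⟩)
    ((blockPi b).toMonoidHom.comp (of k N)) ((blockPi b').toMonoidHom.comp (of k _)) hZ
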